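/- arXiv:2210.14664 — 2 statements merged into one kernel-verified Lean document; each statement's English description precedes it below -/
import Mathlib

section
/- There exist absolute constants C > 0 and c > 0 such that the following holds. Let n ≥ 2, let d₁ ≥ C (log n)², let v_1, …, v_n ∈ ℝ^{d₁} be arbitrary fixed vectors, and let η_1, …, η_n be independent random vectors in ℝ^{d₁} whose coordinates are independent centered Gaussians N(0, r²B²). Set ṽ_i = v_i + η_i. Then with probability at least 1 − 2/n², for all i ≠ j: ‖ṽ_i − ṽ_j‖₂² ≥ c · r²B² (log n)². -/
open MeasureTheory ProbabilityTheory

/-!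
Condition on `η j`: the event that `v i + η i` and `v j + η j` are close then says that a Gaussian
vector with independent coordinates of variance `s` falls into a fixed ball. As the Gaussian density
is at most `1 / √(2πs)`, each factor of `𝔼 exp (-l ‖x - c‖²)` is at most `1 / √(2sl)`, whatever the
centre `c`. Markov's inequality at `l = 1 / (2sδ)` bounds the probability of `‖x - c‖² ≤ δ s d` by
`√(e δ) ^ d`, which is `exp (-d)` for `δ = exp (-3)`. The union bound over the pairs costs a factor
`n²`, so a dimension `d` of order `log n` already suffices.
-/

open scoped NNReal ENNReal

section Probability

variable {Ω : Type*} {mΩ : MeasurableSpace Ω} {μ : Measure Ω}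

lemma one_sub_le_measure_of_measure_compl_le [IsProbabilityMeasure μ] {s : Set Ω} {ε : ℝ≥0∞}
    (h : μ sᶜ ≤ ε) : 1 - ε ≤ μ s :=
  tsub_le_iff_right.2 <| calc
    1 = μ Set.univ := measure_univ.symm
    _ ≤ μ s + μ sᶜ := measure_univ_le_add_compl s
    _ ≤ μ s + ε := by gcongr

lemma measure_exists_ne_le_card_sq_mul {ι : Type*} [Fintype ι] {bad : ι → ι → Set Ω} {ε : ℝ≥0∞}
    (h : ∀ i j, i ≠ j → μ (bad i j) ≤ ε) :
    μ {ω | ∃ i j, i ≠ j ∧ ω ∈ bad i j} ≤ Fintype.card ι ^ 2 * ε := by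
  classical
  have hunion : {ω | ∃ i j, i ≠ j ∧ ω ∈ bad i j} =
      ⋃ p ∈ (Finset.univ : Finset ι).offDiag, bad p.1 p.2 := by
    ext ω
    simp
  calc μ {ω | ∃ i j, i ≠ j ∧ ω ∈ bad i j}
      ≤ ∑ p ∈ (Finset.univ : Finset ι).offDiag, μ (bad p.1 p.2) :=
        hunion ▸ measure_biUnion_finset_le _ _
    _ ≤ (Finset.univ : Finset ι).offDiag.card • ε :=
        Finset.sum_le_card_nsmul _ _ _ fun p hp => h p.1 p.2 (Finset.mem_offDiag.1 hp).2.2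
    _ ≤ Fintype.card ι ^ 2 * ε := by
        rw [nsmul_eq_mul]
        gcongr
        rw [Finset.offDiag_card, Finset.card_univ, sq]
        exact_mod_cast Nat.sub_le _ _

lemma measure_prodMk_mem_le_of_indepFun [IsProbabilityMeasure μ] {E F : Type*} [MeasurableSpace E]
    [MeasurableSpace F] {X : Ω → E} {Y : Ω → F} (hX : Measurable X) (hY : Measurable Y)
    (hXY : IndepFun X Y μ) {S : Set (E × F)} (hS : MeasurableSet S) {ε : ℝ≥0∞}
    (h : ∀ y, μ.map X {x | (x, y) ∈ S} ≤ ε) :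
    μ {ω | (X ω, Y ω) ∈ S} ≤ ε := by
  have : IsProbabilityMeasure (μ.map X) := Measure.isProbabilityMeasure_map hX.aemeasurable
  have : IsProbabilityMeasure (μ.map Y) := Measure.isProbabilityMeasure_map hY.aemeasurable
  have hlaw : μ.map (fun ω => (X ω, Y ω)) = (μ.map X).prod (μ.map Y) :=
    (indepFun_iff_map_prod_eq_prod_map_map hX.aemeasurable hY.aemeasurable).1 hXY
  calc μ {ω | (X ω, Y ω) ∈ S}
      = ((μ.map X).prod (μ.map Y)) S := by rw [← hlaw, Measure.map_apply (hX.prodMk hY) hS]; rfl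
    _ = ∫⁻ y, μ.map X {x | (x, y) ∈ S} ∂(μ.map Y) := Measure.prod_apply_symm hS
    _ ≤ ∫⁻ _, ε ∂(μ.map Y) := lintegral_mono h
    _ = ε := by simp

end Probability

section Product

variable {ι : Type*} [Fintype ι] {E : ι → Type*} [∀ i, MeasurableSpace (E i)]
  (P : ∀ i, Measure (E i)) [∀ i, IsProbabilityMeasure (P i)]

lemma lintegral_pi_prod_eq_prod_lintegral {f : ∀ i, E i → ℝ≥0∞} (hf : ∀ i, Measurable (f i)) :
    ∫⁻ x, ∏ i, f i (x i) ∂(Measure.pi P) = ∏ i, ∫⁻ t, f i t ∂(P i) := by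
  rw [lintegral_prod_eq_prod_lintegral_of_indepFun Finset.univ
    (fun i (x : ∀ i, E i) => f i (x i)) (iIndepFun_pi fun i => (hf i).aemeasurable)
    fun i => (hf i).comp (measurable_pi_apply i)]
  exact Finset.prod_congr rfl fun i _ => (measurePreserving_eval P i).lintegral_comp (hf i)

lemma measure_pi_pair_mem_le {i j : ι} (hij : i ≠ j) {S : Set (E i × E j)} (hS : MeasurableSet S)
    {ε : ℝ≥0∞} (h : ∀ y, P i {x | (x, y) ∈ S} ≤ ε) :
    Measure.pi P {η | (η i, η j) ∈ S} ≤ ε := by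
  have hindep : IndepFun (fun η : ∀ i, E i => η i) (fun η => η j) (Measure.pi P) :=
    (iIndepFun_pi (X := fun _ x => x) fun _ => aemeasurable_id).indepFun hij
  refine measure_prodMk_mem_le_of_indepFun (measurable_pi_apply i) (measurable_pi_apply j)
    hindep hS fun y => ?_
  rw [(measurePreserving_eval P i).map_eq]
  exact h y

end Product

section GaussianSmallBall

variable {s : ℝ≥0}

lemma gaussianReal_le_smul_volume (m : ℝ) (hs : s ≠ 0) :
    gaussianReal m s ≤ ENNReal.ofReal (√(2 * Real.pi * s))⁻¹ • volume := by
  rw [gaussianReal_of_var_ne_zero m hs, ← withDensity_const]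
  refine withDensity_mono (ae_of_all _ fun x => ENNReal.ofReal_le_ofReal ?_)
  refine mul_le_of_le_one_right (by positivity) (Real.exp_le_one_iff.2 ?_)
  rw [neg_div]
  exact neg_nonpos.2 (by positivity)

lemma lintegral_exp_neg_mul_sq_sub {l : ℝ} (hl : 0 < l) (c : ℝ) :
    ∫⁻ x : ℝ, ENNReal.ofReal (Real.exp (-l * (x - c) ^ 2)) = ENNReal.ofReal √(Real.pi / l) := by
  rw [lintegral_sub_right_eq_self (fun x : ℝ => ENNReal.ofReal (Real.exp (-l * x ^ 2))) c,
    ← ofReal_integral_eq_lintegral_ofReal (integrable_exp_neg_mul_sq hl)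
      (ae_of_all _ fun x => (Real.exp_pos _).le), integral_gaussian]

lemma lintegral_exp_neg_mul_sq_sub_gaussianReal_le (m : ℝ) (hs : s ≠ 0) {l : ℝ} (hl : 0 < l)
    (c : ℝ) :
    ∫⁻ x, ENNReal.ofReal (Real.exp (-l * (x - c) ^ 2)) ∂(gaussianReal m s) ≤
      ENNReal.ofReal (√(2 * s * l))⁻¹ := by
  calc ∫⁻ x, ENNReal.ofReal (Real.exp (-l * (x - c) ^ 2)) ∂(gaussianReal m s)
      ≤ ∫⁻ x, ENNReal.ofReal (Real.exp (-l * (x - c) ^ 2))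
          ∂(ENNReal.ofReal (√(2 * Real.pi * s))⁻¹ • volume) :=
        lintegral_mono' (gaussianReal_le_smul_volume m hs) le_rfl
    _ = ENNReal.ofReal ((√(2 * Real.pi * s))⁻¹ * √(Real.pi / l)) := by
        rw [lintegral_smul_measure, lintegral_exp_neg_mul_sq_sub hl, smul_eq_mul,
          ENNReal.ofReal_mul (by positivity)]
    _ = ENNReal.ofReal (√(2 * s * l))⁻¹ := by
        rw [← Real.sqrt_inv, ← Real.sqrt_inv, ← Real.sqrt_mul (by positivity)]
        congr 2
        field_simp

variable {κ : Type*} [Fintype κ]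

lemma lintegral_exp_neg_mul_sum_sq_sub_pi_gaussianReal_le (m : κ → ℝ) (hs : s ≠ 0) {l : ℝ}
    (hl : 0 < l) (c : κ → ℝ) :
    ∫⁻ x, ENNReal.ofReal (Real.exp (-l * ∑ k, (x k - c k) ^ 2))
        ∂(Measure.pi fun k => gaussianReal (m k) s) ≤
      ENNReal.ofReal ((√(2 * s * l))⁻¹ ^ Fintype.card κ) := by
  simp only [Finset.mul_sum, Real.exp_sum,
    ENNReal.ofReal_prod_of_nonneg fun _ _ => (Real.exp_pos _).le]
  rw [lintegral_pi_prod_eq_prod_lintegral _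
    (f := fun k t => ENNReal.ofReal (Real.exp (-l * (t - c k) ^ 2))) fun k => by fun_prop,
    ENNReal.ofReal_pow (by positivity)]
  exact Finset.prod_le_pow_card _ _ _ fun k _ =>
    lintegral_exp_neg_mul_sq_sub_gaussianReal_le (m k) hs hl (c k)

lemma measure_pi_gaussianReal_sum_sq_sub_le_exp_mul (m : κ → ℝ) (hs : s ≠ 0) {l : ℝ} (hl : 0 < l)
    (c : κ → ℝ) (t : ℝ) :
    (Measure.pi fun k => gaussianReal (m k) s) {x | ∑ k, (x k - c k) ^ 2 ≤ t} ≤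
      ENNReal.ofReal (Real.exp (l * t) * (√(2 * s * l))⁻¹ ^ Fintype.card κ) := by
  set P := Measure.pi fun k => gaussianReal (m k) s
  have hsubset : {x : κ → ℝ | ∑ k, (x k - c k) ^ 2 ≤ t} ⊆
      {x | ENNReal.ofReal (Real.exp (-l * t)) ≤
        ENNReal.ofReal (Real.exp (-l * ∑ k, (x k - c k) ^ 2))} := fun x hx =>
    ENNReal.ofReal_le_ofReal <| Real.exp_le_exp.2 <|
      mul_le_mul_of_nonpos_left hx (neg_nonpos.2 hl.le)
  have hmeas : Measurable fun x : κ → ℝ =>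
      ENNReal.ofReal (Real.exp (-l * ∑ k, (x k - c k) ^ 2)) := by fun_prop
  calc P {x | ∑ k, (x k - c k) ^ 2 ≤ t}
      ≤ (∫⁻ x, ENNReal.ofReal (Real.exp (-l * ∑ k, (x k - c k) ^ 2)) ∂P) /
          ENNReal.ofReal (Real.exp (-l * t)) :=
        (measure_mono hsubset).trans <| meas_ge_le_lintegral_div hmeas.aemeasurable
          (ENNReal.ofReal_pos.2 (Real.exp_pos _)).ne' ENNReal.ofReal_ne_top
    _ ≤ ENNReal.ofReal ((√(2 * s * l))⁻¹ ^ Fintype.card κ) /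
          ENNReal.ofReal (Real.exp (-l * t)) := by
        gcongr
        exact lintegral_exp_neg_mul_sum_sq_sub_pi_gaussianReal_le m hs hl c
    _ = ENNReal.ofReal (Real.exp (l * t) * (√(2 * s * l))⁻¹ ^ Fintype.card κ) := by
        rw [← ENNReal.ofReal_div_of_pos (Real.exp_pos _), neg_mul, Real.exp_neg, div_inv_eq_mul,
          mul_comm]

lemma measure_pi_gaussianReal_sum_sq_sub_le_sqrt_pow (m : κ → ℝ) (hs : s ≠ 0) {δ : ℝ} (hδ : 0 < δ)
    (c : κ → ℝ) :
    (Measure.pi fun k => gaussianReal (m k) s)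
        {x | ∑ k, (x k - c k) ^ 2 ≤ δ * s * Fintype.card κ} ≤
      ENNReal.ofReal (√(Real.exp 1 * δ) ^ Fintype.card κ) := by
  have hl : 0 < 1 / (2 * s * δ) := by positivity
  convert measure_pi_gaussianReal_sum_sq_sub_le_exp_mul m hs hl c (δ * s * Fintype.card κ) using 2
  have hexponent : 1 / (2 * s * δ) * (δ * s * Fintype.card κ) = Fintype.card κ * (1 / 2) := by
    field_simp
  have hfactor : 2 * s * (1 / (2 * s * δ)) = δ⁻¹ := by field_simp
  rw [hexponent, hfactor, Real.exp_nat_mul, ← mul_pow, Real.exp_half, Real.sqrt_inv, inv_inv,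
    Real.sqrt_mul (Real.exp_pos _).le]

end GaussianSmallBall

section PairwiseDistances

variable {ι κ : Type*} [Fintype ι] [Fintype κ] {s : ℝ≥0}

lemma measure_perturbed_pair_sum_sq_le (hs : s ≠ 0) {δ : ℝ} (hδ : 0 < δ) (v : ι → κ → ℝ)
    {i j : ι} (hij : i ≠ j) :
    (Measure.pi fun _ : ι => Measure.pi fun _ : κ => gaussianReal 0 s)
        {η | ∑ k, ((v i k + η i k) - (v j k + η j k)) ^ 2 ≤ δ * s * Fintype.card κ} ≤
      ENNReal.ofReal (√(Real.exp 1 * δ) ^ Fintype.card κ) := by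
  let S : Set ((κ → ℝ) × (κ → ℝ)) :=
    {p | ∑ k, ((v i k + p.1 k) - (v j k + p.2 k)) ^ 2 ≤ δ * s * Fintype.card κ}
  have hS : MeasurableSet S := measurableSet_le (by fun_prop) measurable_const
  refine measure_pi_pair_mem_le (fun _ => Measure.pi fun _ => gaussianReal 0 s) hij hS fun y => ?_
  have hcentre (x : κ → ℝ) (k : κ) :
      (v i k + x k) - (v j k + y k) = x k - (v j k + y k - v i k) := by ring
  simpa only [S, Set.mem_ofPred_eq, hcentre] using
    measure_pi_gaussianReal_sum_sq_sub_le_sqrt_pow (fun _ => 0) hs hδ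
      fun k => v j k + y k - v i k

lemma one_sub_card_sq_mul_le_measure_perturbed_pairwise_sum_sq_ge (hs : s ≠ 0) {δ : ℝ}
    (hδ : 0 < δ) (v : ι → κ → ℝ) :
    ENNReal.ofReal (1 - Fintype.card ι ^ 2 * √(Real.exp 1 * δ) ^ Fintype.card κ) ≤
      (Measure.pi fun _ : ι => Measure.pi fun _ : κ => gaussianReal 0 s)
        {η | ∀ i j, i ≠ j →
          δ * s * Fintype.card κ ≤ ∑ k, ((v i k + η i k) - (v j k + η j k)) ^ 2} := by
  rw [ENNReal.ofReal_sub _ (by positivity), ENNReal.ofReal_one,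
    ENNReal.ofReal_mul (by positivity), ENNReal.ofReal_pow (Nat.cast_nonneg _),
    ENNReal.ofReal_natCast]
  refine one_sub_le_measure_of_measure_compl_le <| (measure_mono fun η hη => ?_).trans <|
    measure_exists_ne_le_card_sq_mul fun i j hij => measure_perturbed_pair_sum_sq_le hs hδ v hij
  simp only [Set.mem_compl_iff, Set.mem_ofPred_eq, not_forall, not_le] at hη ⊢
  obtain ⟨i, j, hij, hclose⟩ := hη
  exact ⟨i, j, hij, hclose.le⟩

theorem perturbed_pairwise_distances_lower_bound_general [Nonempty ι] (hs : s ≠ 0)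
    (hcard : 4 * Real.log (Fintype.card ι) ≤ Fintype.card κ) (v : ι → κ → ℝ) :
    ENNReal.ofReal (1 - 1 / (Fintype.card ι : ℝ) ^ 2) ≤
      (Measure.pi fun _ : ι => Measure.pi fun _ : κ => gaussianReal 0 s)
        {η | ∀ i j, i ≠ j →
          Real.exp (-3) * s * Fintype.card κ ≤ ∑ k, ((v i k + η i k) - (v j k + η j k)) ^ 2} := by
  refine le_trans (ENNReal.ofReal_le_ofReal (sub_le_sub_left ?_ 1))
    (one_sub_card_sq_mul_le_measure_perturbed_pairwise_sum_sq_ge hs (Real.exp_pos (-3)) v)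
  have hrate : √(Real.exp 1 * Real.exp (-3)) = Real.exp (-1) := by
    rw [← Real.exp_add, ← Real.exp_half]
    norm_num
  have hpow : (Fintype.card ι : ℝ) ^ 4 ≤ Real.exp (Fintype.card κ) := by
    rw [← Real.log_le_iff_le_exp (by positivity), Real.log_pow]
    exact_mod_cast hcard
  rw [hrate, ← Real.exp_nat_mul, mul_neg_one, Real.exp_neg, ← div_eq_mul_inv,
    div_le_div_iff₀ (Real.exp_pos _) (by positivity)]
  linarith

end PairwiseDistances

lemma four_mul_log_le_six_mul_log_sq {x : ℝ} (hx : 2 ≤ x) :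
    4 * Real.log x ≤ 6 * Real.log x ^ 2 := by
  have hlog : 2 / 3 ≤ Real.log x := by
    linarith [Real.log_two_gt_d9, Real.log_le_log two_pos hx]
  nlinarith

/-- there are absolute constants `C, c > 0` such that for any `n ≥ 2` and any
`d₁ ≥ C (log n)²` fixed vectors `v_i ∈ ℝ^{d₁}`, after adding independent Gaussian
perturbations with i.i.d. `N(0, r²B²)` coordinates, with probability at least `1 - 2/n²`
all pairwise squared distances are at least `c r²B² (log n)²`. -/
theorem perturbed_pairwise_distances_lower_bound :
    ∃ C c : ℝ, 0 < C ∧ 0 < c ∧ ∀ n d₁ : ℕ, 2 ≤ n →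
      C * Real.log n ^ 2 ≤ (d₁ : ℝ) →
      ∀ B r : ℝ, 0 < B → 0 < r →
      ∀ v : Fin n → Fin d₁ → ℝ,
        ENNReal.ofReal (1 - 2 / (n : ℝ) ^ 2) ≤
          (Measure.pi fun _ : Fin n => Measure.pi fun _ : Fin d₁ =>
              gaussianReal 0 ((r * B) ^ 2).toNNReal)
            {η : Fin n → Fin d₁ → ℝ | ∀ i j, i ≠ j →
              c * r ^ 2 * B ^ 2 * Real.log n ^ 2 ≤
                ∑ m, ((v i m + η i m) - (v j m + η j m)) ^ 2} := by
  refine ⟨6, 6 * Real.exp (-3), by norm_num, by positivity, fun n d₁ hn hd B r hB hr v => ?_⟩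
  have : Nonempty (Fin n) := ⟨⟨0, by lia⟩⟩
  have hvar : ((r * B) ^ 2).toNNReal ≠ 0 := (Real.toNNReal_pos.2 (by positivity)).ne'
  have hdim : 4 * Real.log (Fintype.card (Fin n)) ≤ Fintype.card (Fin d₁) := by
    simpa using (four_mul_log_le_six_mul_log_sq (by exact_mod_cast hn)).trans hd
  have hthreshold : 6 * Real.exp (-3) * r ^ 2 * B ^ 2 * Real.log n ^ 2 ≤
      Real.exp (-3) * ((r * B) ^ 2).toNNReal * Fintype.card (Fin d₁) := by
    rw [Real.coe_toNNReal _ (sq_nonneg _), Fintype.card_fin]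
    linear_combination Real.exp (-3) * (r * B) ^ 2 * hd
  calc ENNReal.ofReal (1 - 2 / (n : ℝ) ^ 2)
      ≤ ENNReal.ofReal (1 - 1 / (Fintype.card (Fin n) : ℝ) ^ 2) := by
        rw [Fintype.card_fin]
        gcongr
        norm_num
    _ ≤ _ := perturbed_pairwise_distances_lower_bound_general hvar hdim v
    _ ≤ _ := measure_mono fun η hη i j hij => hthreshold.trans (hη i j hij)
end

section
/- Let x_1, …, x_n ∈ ℝ^d, let P : ℝ^d → ℝ^{d_t} be the projection onto a fixed subset of d_t coordinates, and let τ ≥ 1 satisfy ‖x_i − x_j‖₂² ≤ τ ‖P x_i − P x_j‖₂² for all i, j ∈ [n]. Let C̃^{(t)} = {c̃_1, …, c̃_k} ⊆ ℝ^{d_t} be a set of k centers that is an α-approximate solution (α ≥ 1) for k-means on the projected data {P x_1, …, P x_n}, i.e. Σ_i min_l ‖P x_i − c̃_l‖₂² ≤ α · Σ_i min_{c∈C'} ‖P x_i − c‖₂² for every set C' of k points in ℝ^{d_t}. For each i let π(i) ∈ argmin_l ‖P x_i − c̃_l‖₂, let B_l = {i : π(i) = l}, and for each nonempty B_l let μ_l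 = (1/|B_l|) Σ_{i∈B_l} x_i, setting C̃ = {μ_l : B_l ≠ ∅}. Then for every set C of k points in ℝ^d: cost(X, C̃) ≤ τ · Σ_i ‖P x_i − c̃_{π(i)}‖₂² ≤ α τ · cost(X, C). In particular C̃ is an ατ-approximate solution to k-means on the full data x_1, …, x_n. -/
/-!
For a family `x` indexed by a finite set `s` in an inner product space and any point `c`,
`∑ᵢⱼ ‖xᵢ - xⱼ‖² = 2 |s| ∑ᵢ ‖xᵢ - c‖² - 2 ‖∑ᵢ (xᵢ - c)‖²`, and the last term vanishes when `c` is the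
centroid. The sum of squared pairwise distances therefore computes the cost of a cluster about its
centroid and bounds from below its cost about any other center, so a pairwise comparison of
distances in two spaces becomes a comparison of cluster costs. Moreover, a nonexpansive map
cannot increase the cost of a center set, so the approximation guarantee for the image data can be
tested against the images of arbitrary centers.
-/

open Finset

variable {ι κ E F : Type*}

section Centroid

variable {𝕜 : Type*} [DivisionRing 𝕜] [CharZero 𝕜] [AddCommGroup E] [Module 𝕜 E]

theorem centroid_eq_inv_card_smul_sum {s : Finset ι} (hs : s.Nonempty) (x : ι → E) :
    s.centroid 𝕜 x = (#s : 𝕜)⁻¹ • ∑ i ∈ s, x i := by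
  rw [centroid_def, affineCombination_eq_linear_combination _ _ _
    (s.sum_centroidWeights_eq_one_of_nonempty 𝕜 hs), smul_sum]
  simp only [centroidWeights_apply]

theorem sum_sub_centroid {s : Finset ι} (hs : s.Nonempty) (x : ι → E) :
    ∑ i ∈ s, (x i - s.centroid 𝕜 x) = 0 := by
  have card_ne_zero : (#s : 𝕜) ≠ 0 := Nat.cast_ne_zero.mpr hs.card_ne_zero
  rw [sum_sub_distrib, sum_const, centroid_eq_inv_card_smul_sum hs, ← Nat.cast_smul_eq_nsmul 𝕜,
    smul_inv_smul₀ card_ne_zero, sub_self]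

end Centroid

section PairwiseDistances

variable [SeminormedAddCommGroup E] [InnerProductSpace ℝ E]
  [SeminormedAddCommGroup F] [InnerProductSpace ℝ F]

theorem sum_sum_norm_sub_sq (s : Finset ι) (x : ι → E) (c : E) :
    ∑ i ∈ s, ∑ j ∈ s, ‖x i - x j‖ ^ 2
      = 2 * #s * ∑ i ∈ s, ‖x i - c‖ ^ 2 - 2 * ‖∑ i ∈ s, (x i - c)‖ ^ 2 := by
  have expand (i j : ι) : ‖x i - x j‖ ^ 2
      = ‖x i - c‖ ^ 2 - 2 * inner ℝ (x i - c) (x j - c) + ‖x j - c‖ ^ 2 := by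
    rw [← norm_sub_sq_real, sub_sub_sub_cancel_right]
  simp only [expand, sum_add_distrib, sum_sub_distrib, sum_const, nsmul_eq_mul, ← mul_sum,
    ← inner_sum, ← sum_inner, real_inner_self_eq_norm_sq]
  ring

theorem sum_sum_norm_sub_sq_le (s : Finset ι) (x : ι → E) (c : E) :
    ∑ i ∈ s, ∑ j ∈ s, ‖x i - x j‖ ^ 2 ≤ 2 * #s * ∑ i ∈ s, ‖x i - c‖ ^ 2 := by
  rw [sum_sum_norm_sub_sq s x c]
  exact sub_le_self _ (by positivity)

theorem sum_sum_norm_sub_sq_eq_centroid {s : Finset ι} (hs : s.Nonempty) (x : ι → E) :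
    ∑ i ∈ s, ∑ j ∈ s, ‖x i - x j‖ ^ 2
      = 2 * #s * ∑ i ∈ s, ‖x i - s.centroid ℝ x‖ ^ 2 := by
  simp [sum_sum_norm_sub_sq s x (s.centroid ℝ x), sum_sub_centroid hs]

theorem sum_norm_sub_centroid_sq_le {s : Finset ι} {x : ι → E} {y : ι → F} {τ : ℝ} (hτ : 0 ≤ τ)
    (hxy : ∀ i ∈ s, ∀ j ∈ s, ‖x i - x j‖ ^ 2 ≤ τ * ‖y i - y j‖ ^ 2) (c : F) :
    ∑ i ∈ s, ‖x i - s.centroid ℝ x‖ ^ 2 ≤ τ * ∑ i ∈ s, ‖y i - c‖ ^ 2 := by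
  rcases s.eq_empty_or_nonempty with rfl | hs
  · simp
  have card_pos : (0 : ℝ) < 2 * #s := by have := hs.card_pos; positivity
  refine le_of_mul_le_mul_left ?_ card_pos
  calc 2 * #s * ∑ i ∈ s, ‖x i - s.centroid ℝ x‖ ^ 2
      = ∑ i ∈ s, ∑ j ∈ s, ‖x i - x j‖ ^ 2 := (sum_sum_norm_sub_sq_eq_centroid hs x).symm
    _ ≤ ∑ i ∈ s, ∑ j ∈ s, τ * ‖y i - y j‖ ^ 2 :=
        sum_le_sum fun i hi => sum_le_sum fun j hj => hxy i hi j hj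
    _ = τ * ∑ i ∈ s, ∑ j ∈ s, ‖y i - y j‖ ^ 2 := by simp only [mul_sum]
    _ ≤ τ * (2 * #s * ∑ i ∈ s, ‖y i - c‖ ^ 2) := by
        gcongr
        exact sum_sum_norm_sub_sq_le s y c
    _ = 2 * #s * (τ * ∑ i ∈ s, ‖y i - c‖ ^ 2) := by ring

end PairwiseDistances

section KMeansCost

variable [Fintype ι] [SeminormedAddCommGroup E] [SeminormedAddCommGroup F]

/-- The k-means cost of the data `x` with respect to the centers `c`, both given as indexed families
so that points may be repeated. The infimum is the junk value `0` when there are no centers. -/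
noncomputable def kmeansCost (x : ι → E) (c : κ → E) : ℝ :=
  ∑ i, ⨅ l, ‖x i - c l‖ ^ 2

theorem bddBelow_range_norm_sub_sq (v : E) (c : κ → E) :
    BddBelow (Set.range fun l => ‖v - c l‖ ^ 2) :=
  ⟨0, Set.forall_mem_range.mpr fun _ => sq_nonneg _⟩

theorem kmeansCost_le_sum (x : ι → E) (c : κ → E) (π : ι → κ) :
    kmeansCost x c ≤ ∑ i, ‖x i - c (π i)‖ ^ 2 :=
  sum_le_sum fun i _ => ciInf_le (bddBelow_range_norm_sub_sq (x i) c) (π i)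

theorem sum_le_kmeansCost {x : ι → E} {c : κ → E} {π : ι → κ}
    (hπ : ∀ i l, ‖x i - c (π i)‖ ^ 2 ≤ ‖x i - c l‖ ^ 2) :
    ∑ i, ‖x i - c (π i)‖ ^ 2 ≤ kmeansCost x c := by
  refine sum_le_sum fun i _ => ?_
  have : Nonempty κ := ⟨π i⟩
  exact le_ciInf (hπ i)

theorem kmeansCost_comp_le {P : E → F} (hP : LipschitzWith 1 P) (x : ι → E) (c : κ → E) :
    kmeansCost (P ∘ x) (P ∘ c) ≤ kmeansCost x c := by
  refine sum_le_sum fun i _ => ciInf_mono (bddBelow_range_norm_sub_sq _ _) fun l => ?_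
  have nonexpansive : ‖P (x i) - P (c l)‖ ≤ ‖x i - c l‖ := by
    simpa using hP.norm_sub_le (x i) (c l)
  simpa only [Function.comp_apply] using pow_le_pow_left₀ (norm_nonneg _) nonexpansive 2

end KMeansCost

section Cluster

variable [Fintype ι] [DecidableEq κ]

/-- The cluster with label `l` of the partition of the data indices given by the labelling `π`. -/
def cluster (π : ι → κ) (l : κ) : Finset ι := {i | π i = l}

theorem mem_cluster {π : ι → κ} {l : κ} {i : ι} : i ∈ cluster π l ↔ π i = l :=
  mem_filter_univ i

theorem cluster_apply_nonempty (π : ι → κ) (i : ι) : (cluster π (π i)).Nonempty :=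
  ⟨i, mem_cluster.mpr rfl⟩

theorem sum_image_sum_cluster {M : Type*} [AddCommMonoid M] (π : ι → κ) (f : ι → κ → M) :
    ∑ l ∈ univ.image π, ∑ i ∈ cluster π l, f i l = ∑ i, f i (π i) := by
  rw [← sum_fiberwise_of_maps_to (fun i _ => mem_image_of_mem π (mem_univ i))]
  refine sum_congr rfl fun l _ => sum_congr rfl fun i hi => ?_
  rw [mem_cluster.mp hi]

variable [SeminormedAddCommGroup E] [InnerProductSpace ℝ E]
  [SeminormedAddCommGroup F] [InnerProductSpace ℝ F]

theorem kmeansCost_centroid_le {x : ι → E} {y : ι → F} {τ : ℝ} (hτ : 0 ≤ τ)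
    (hxy : ∀ i j, ‖x i - x j‖ ^ 2 ≤ τ * ‖y i - y j‖ ^ 2) (c : κ → F) (π : ι → κ) :
    kmeansCost x (fun l : {l // (cluster π l).Nonempty} => (cluster π l).centroid ℝ x)
      ≤ τ * ∑ i, ‖y i - c (π i)‖ ^ 2 := by
  calc kmeansCost x (fun l : {l // (cluster π l).Nonempty} => (cluster π l).centroid ℝ x)
      ≤ ∑ i, ‖x i - (cluster π (π i)).centroid ℝ x‖ ^ 2 :=
        kmeansCost_le_sum x (fun l : {l // (cluster π l).Nonempty} => (cluster π l).centroid ℝ x)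
          fun i => ⟨π i, cluster_apply_nonempty π i⟩
    _ = ∑ l ∈ univ.image π, ∑ i ∈ cluster π l, ‖x i - (cluster π l).centroid ℝ x‖ ^ 2 :=
        (sum_image_sum_cluster π fun i l => ‖x i - (cluster π l).centroid ℝ x‖ ^ 2).symm
    _ ≤ ∑ l ∈ univ.image π, τ * ∑ i ∈ cluster π l, ‖y i - c l‖ ^ 2 :=
        sum_le_sum fun l _ => sum_norm_sub_centroid_sq_le hτ (fun i _ j _ => hxy i j) (c l)
    _ = τ * ∑ i, ‖y i - c (π i)‖ ^ 2 := by
        rw [← mul_sum, sum_image_sum_cluster π fun i l => ‖y i - c l‖ ^ 2]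

theorem local_partition_induces_global_approximation_general
    {x : ι → E} {P : E → F} (hP : LipschitzWith 1 P) {τ : ℝ} (hτ : 0 ≤ τ)
    (hproj : ∀ i j, ‖x i - x j‖ ^ 2 ≤ τ * ‖P (x i) - P (x j)‖ ^ 2)
    {α : ℝ} (hα : 0 ≤ α) {c : κ → F}
    (happrox : ∀ C' : κ → F, kmeansCost (P ∘ x) c ≤ α * kmeansCost (P ∘ x) C')
    {π : ι → κ} (hπ : ∀ i l, ‖P (x i) - c (π i)‖ ^ 2 ≤ ‖P (x i) - c l‖ ^ 2) (C : κ → E) :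
    kmeansCost x (fun l : {l // (cluster π l).Nonempty} => (cluster π l).centroid ℝ x)
        ≤ τ * ∑ i, ‖P (x i) - c (π i)‖ ^ 2
      ∧ τ * ∑ i, ‖P (x i) - c (π i)‖ ^ 2 ≤ α * τ * kmeansCost x C := by
  refine ⟨kmeansCost_centroid_le hτ hproj c π, ?_⟩
  calc τ * ∑ i, ‖P (x i) - c (π i)‖ ^ 2
      ≤ τ * kmeansCost (P ∘ x) c := by
        gcongr
        exact sum_le_kmeansCost (x := P ∘ x) hπ
    _ ≤ τ * (α * kmeansCost (P ∘ x) (P ∘ C)) := by gcongr; exact happrox (P ∘ C)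
    _ ≤ τ * (α * kmeansCost x C) := by gcongr; exact kmeansCost_comp_le hP x C
    _ = α * τ * kmeansCost x C := by ring

end Cluster

section Coordinates

variable {m n : Type*} [Fintype m] [Fintype n]

theorem euclidean_norm_sub_sq (u v : EuclideanSpace ℝ m) :
    ‖u - v‖ ^ 2 = ∑ a, (u a - v a) ^ 2 := by
  simp only [EuclideanSpace.real_norm_sq_eq, PiLp.sub_apply]

theorem centroid_toLp {s : Finset ι} (hs : s.Nonempty) (x : ι → m → ℝ) :
    s.centroid ℝ (fun i => WithLp.toLp 2 (x i))
      = WithLp.toLp 2 fun a => (∑ i ∈ s, x i a) / #s := by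
  ext a
  simp [centroid_eq_inv_card_smul_sum hs, inv_mul_eq_div]

/-- The map of Euclidean spaces that reads off the coordinates listed by `emb`; for injective `emb`
it is the projection onto a subset of the coordinates. -/
def coordProj (emb : m → n) (v : EuclideanSpace ℝ n) : EuclideanSpace ℝ m :=
  WithLp.toLp 2 fun a => v (emb a)

theorem lipschitzWith_one_coordProj {emb : m → n} (hemb : Function.Injective emb) :
    LipschitzWith 1 (coordProj emb) := by
  refine LipschitzWith.of_dist_le_mul fun u v => ?_
  rw [NNReal.coe_one, one_mul, ← sq_le_sq₀ dist_nonneg dist_nonneg,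
    EuclideanSpace.dist_sq_eq, EuclideanSpace.dist_sq_eq]
  calc ∑ a, dist (u (emb a)) (v (emb a)) ^ 2
      = ∑ b ∈ univ.map ⟨emb, hemb⟩, dist (u b) (v b) ^ 2 := by
        rw [sum_map, Function.Embedding.coeFn_mk]
    _ ≤ ∑ b, dist (u b) (v b) ^ 2 := sum_le_univ_sum_of_nonneg fun _ => sq_nonneg _

end Coordinates

/-- a local `α`-approximate k-means solution `C̃^{(t)} = {c̃_l}` on the
projected data (projection `emb` onto one party's coordinates, satisfying the `τ`-distance
assumption) induces, via the centroids `μ_l` of the local clusters `B_l`, a global center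
set `C̃ = {μ_l : B_l ≠ ∅}` with `cost(X, C̃) ≤ τ Σᵢ ‖Px_i − c̃_{π(i)}‖² ≤ ατ cost(X, C)`
for every set `C` of `k` centers. -/
theorem local_partition_induces_global_approximation (n d dt k : ℕ) (hn : 0 < n) (hk : 0 < k)
    (x : Fin n → Fin d → ℝ)
    (emb : Fin dt → Fin d) (hemb : Function.Injective emb)
    (τ : ℝ) (hτ : 1 ≤ τ)
    (hproj : ∀ i j, (∑ m, (x i m - x j m) ^ 2) ≤ τ * ∑ a, (x i (emb a) - x j (emb a)) ^ 2)
    (α : ℝ) (hα : 1 ≤ α)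
    (ctil : Fin k → Fin dt → ℝ)
    (happrox : ∀ C' : Fin k → Fin dt → ℝ,
      (∑ i, ⨅ l, ∑ a, (x i (emb a) - ctil l a) ^ 2) ≤
        α * ∑ i, ⨅ l, ∑ a, (x i (emb a) - C' l a) ^ 2)
    (π : Fin n → Fin k)
    (hπ : ∀ i l, (∑ a, (x i (emb a) - ctil (π i) a) ^ 2) ≤
      ∑ a, (x i (emb a) - ctil l a) ^ 2)
    (B : Fin k → Finset (Fin n)) (hB : ∀ l, B l = Finset.univ.filter fun i => π i = l)
    (μ : Fin k → Fin d → ℝ)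
    (hμ : ∀ l, (B l).Nonempty → μ l = fun m => (∑ i ∈ B l, x i m) / (B l).card) :
    ∀ C : Fin k → Fin d → ℝ,
      (∑ i, ⨅ l : {l : Fin k // (B l).Nonempty}, ∑ m, (x i m - μ l.1 m) ^ 2)
          ≤ τ * ∑ i, ∑ a, (x i (emb a) - ctil (π i) a) ^ 2
      ∧ τ * (∑ i, ∑ a, (x i (emb a) - ctil (π i) a) ^ 2)
          ≤ α * τ * ∑ i, ⨅ l, ∑ m, (x i m - C l m) ^ 2 := by
  intro C
  obtain rfl : B = cluster π := funext hB
  let X (i : Fin n) : EuclideanSpace ℝ (Fin d) := WithLp.toLp 2 (x i)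
  let c (l : Fin k) : EuclideanSpace ℝ (Fin dt) := WithLp.toLp 2 (ctil l)
  have centroid_eq (l : {l // (cluster π l).Nonempty}) :
      (cluster π l).centroid ℝ X = WithLp.toLp 2 (μ l) := by
    rw [centroid_toLp l.2, hμ l l.2]
  have happroxX (C' : Fin k → EuclideanSpace ℝ (Fin dt)) :
      kmeansCost (coordProj emb ∘ X) c ≤ α * kmeansCost (coordProj emb ∘ X) C' := by
    simpa only [kmeansCost, euclidean_norm_sub_sq, Function.comp_apply, coordProj, X, c] using
      happrox fun l => C' l
  have approx := local_partition_induces_global_approximation_general (x := X) (c := c) (π := π)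
    (lipschitzWith_one_coordProj hemb) (zero_le_one.trans hτ)
    (by simpa only [euclidean_norm_sub_sq, coordProj, X] using hproj)
    (zero_le_one.trans hα) happroxX
    (by simpa only [euclidean_norm_sub_sq, coordProj, X, c] using hπ) fun l => WithLp.toLp 2 (C l)
  simpa only [kmeansCost, centroid_eq, euclidean_norm_sub_sq, coordProj, X, c] using approx
end
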